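/- For every real ε > 0 there exists t₀ such that for every even integer t ≥ t₀ the following holds. Let V ⊆ 𝔽₂^t be the set of vectors of even Hamming weight and let G₀ be the simple graph on V in which distinct u, v are adjacent iff u · v = 1. Then the number of functions f from a fixed t-element set S to V whose image f(S) is an independent set of G₀ is at most 2^{(−3/8 + ε)·t²} · |V|^t, where |V| = 2^{t−1}. -/

import Mathlib

section IsotropicTuples

open Module LinearMap.BilinForm

variable {K V : Type*} [Field K] [AddCommGroup V] [Module K V] {B : LinearMap.BilinForm K V}

theorem mem_orthogonal_sup_span_singleton {W : Submodule K V} {v w : V} :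
    w ∈ B.orthogonal (W ⊔ K ∙ v) ↔ w ∈ B.orthogonal W ∧ B v w = 0 := by
  simp only [mem_orthogonal_iff]
  refine ⟨fun h => ⟨fun n hn => h n (Submodule.mem_sup_left hn),
    h v (Submodule.mem_sup_right (Submodule.mem_span_singleton_self v))⟩, ?_⟩
  rintro ⟨hW, hv⟩ n hn
  obtain ⟨a, ha, b, hb, rfl⟩ := Submodule.mem_sup.1 hn
  obtain ⟨c, rfl⟩ := Submodule.mem_span_singleton.1 hb
  simp [hW a ha, hv]

theorem sup_span_singleton_le_orthogonal (hs : B.IsSymm) {W : Submodule K V}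
    (hW : W ≤ B.orthogonal W) {v : V} (hv : v ∈ B.orthogonal W) (hvv : B v v = 0) :
    W ⊔ K ∙ v ≤ B.orthogonal (W ⊔ K ∙ v) := by
  refine sup_le (fun w hw => ?_) ?_
  · exact mem_orthogonal_sup_span_singleton.2
      ⟨hW hw, (hs.eq v w).trans (mem_orthogonal_iff.1 hv w hw)⟩
  · rw [Submodule.span_singleton_le_iff_mem]
    exact mem_orthogonal_sup_span_singleton.2 ⟨hv, hvv⟩

theorem two_mul_finrank_le_of_le_orthogonal [FiniteDimensional K V] (hB : B.Nondegenerate)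
    {W : Submodule K V} (hW : W ≤ B.orthogonal W) : 2 * finrank K W ≤ finrank K V := by
  have h₁ := Submodule.finrank_mono hW
  have h₂ := Submodule.finrank_le W
  rw [finrank_orthogonal hB] at h₁
  omega

/-- The `k`-tuples of pairwise orthogonal isotropic vectors that are orthogonal to `W`. -/
def isotropicTuples (B : LinearMap.BilinForm K V) (W : Submodule K V) (k : ℕ) :
    Set (Fin k → V) :=
  {f | (∀ i, f i ∈ B.orthogonal W) ∧ ∀ i j, B (f i) (f j) = 0}

theorem tail_mem_isotropicTuples {W : Submodule K V} {k : ℕ} {f : Fin (k + 1) → V}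
    (hf : f ∈ isotropicTuples B W (k + 1)) :
    Fin.tail f ∈ isotropicTuples B (W ⊔ K ∙ f 0) k :=
  ⟨fun i => mem_orthogonal_sup_span_singleton.2 ⟨hf.1 i.succ, hf.2 0 i.succ⟩,
    fun i j => hf.2 i.succ j.succ⟩

theorem card_isotropicTuples_succ_le [Finite V] (W : Submodule K V) (k : ℕ) (X Y : ℕ)
    (hX : ∀ v ∈ W, Nat.card (isotropicTuples B (W ⊔ K ∙ v) k) ≤ X)
    (hY : ∀ v ∈ B.orthogonal W, B v v = 0 → v ∉ W →
      Nat.card (isotropicTuples B (W ⊔ K ∙ v) k) ≤ Y) :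
    Nat.card (isotropicTuples B W (k + 1)) ≤
      Nat.card W * X + Nat.card (B.orthogonal W) * Y := by
  classical
  have := Fintype.ofFinite V
  let T := {v : V // v ∈ B.orthogonal W ∧ B v v = 0}
  let φ : isotropicTuples B W (k + 1) → Σ v : T, isotropicTuples B (W ⊔ K ∙ v.1) k :=
    fun f => ⟨⟨f.1 0, f.2.1 0, f.2.2 0 0⟩, ⟨Fin.tail f.1, tail_mem_isotropicTuples f.2⟩⟩
  have hφ : Function.Injective φ := by
    intro f g hfg
    have h := congrArg
      (fun p : Σ v : T, isotropicTuples B (W ⊔ K ∙ v.1) k =>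
        (Fin.cons p.1.1 p.2.1 : Fin (k + 1) → V)) hfg
    simpa only [φ, Fin.cons_self_tail, Subtype.coe_inj] using h
  calc Nat.card (isotropicTuples B W (k + 1))
      ≤ Nat.card (Σ v : T, isotropicTuples B (W ⊔ K ∙ v.1) k) :=
        Nat.card_le_card_of_injective φ hφ
    _ = ∑ v : T, Nat.card (isotropicTuples B (W ⊔ K ∙ v.1) k) := Nat.card_sigma
    _ ≤ ∑ v : T, ((if v.1 ∈ W then X else 0) + if v.1 ∈ B.orthogonal W then Y else 0) := by
        refine Finset.sum_le_sum fun v _ => ?_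
        rw [if_pos v.2.1]
        split_ifs with h
        · exact (hX v.1 h).trans le_self_add
        · exact (hY v.1 v.2.1 v.2.2 h).trans le_add_self
    _ ≤ ∑ v : V, ((if v ∈ W then X else 0) + if v ∈ B.orthogonal W then Y else 0) := by
        refine (Finset.sum_map Finset.univ (Function.Embedding.subtype _) (fun v : V =>
          (if v ∈ W then X else 0) + if v ∈ B.orthogonal W then Y else 0)).symm.trans_le ?_
        exact Finset.sum_le_sum_of_subset (Finset.subset_univ _)
    _ = Nat.card W * X + Nat.card (B.orthogonal W) * Y := by
        rw [Finset.sum_add_distrib, ← Finset.sum_filter, ← Finset.sum_filter, Finset.sum_const,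
          Finset.sum_const, smul_eq_mul, smul_eq_mul, ← Fintype.card_subtype,
          ← Fintype.card_subtype, Nat.card_eq_fintype_card, Nat.card_eq_fintype_card]

/-- A bound for the number of isotropic `k`-tuples orthogonal to a totally isotropic subspace whose
dimension is `d` less than half the dimension of the space. -/
theorem card_isotropicTuples_le [Finite K] [FiniteDimensional K V] (hB : B.Nondegenerate)
    (hs : B.IsSymm) {m : ℕ} (hm : finrank K V = 2 * m) (k : ℕ) :
    ∀ (d : ℕ) (W : Submodule K V), W ≤ B.orthogonal W → finrank K W + d = m →
      Nat.card (isotropicTuples B W k) ≤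
        2 ^ k * Nat.card K ^ (m * k + (d + 1).choose 2) := by
  have hq : 1 ≤ Nat.card K := Nat.card_pos
  have : Finite V := Module.finite_of_finite K
  induction k with
  | zero =>
    intro d W _ _
    refine (Finite.card_le_one_iff_subsingleton.2 inferInstance).trans ?_
    exact Nat.one_le_iff_ne_zero.2 (by positivity)
  | succ k ih =>
    intro d W hW hd
    have hc : (d + 1).choose 2 = d + d.choose 2 := by
      rw [Nat.choose_succ_succ' d 1, Nat.choose_one_right]
    have key := card_isotropicTuples_succ_le (B := B) W k
      (2 ^ k * Nat.card K ^ (m * k + (d + 1).choose 2))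
      (2 ^ k * Nat.card K ^ (m * k + d.choose 2))
      (fun v hv => by
        rw [sup_eq_left.2 ((Submodule.span_singleton_le_iff_mem v W).2 hv)]
        exact ih d W hW hd)
      (fun v hv hvv hvW => by
        have hiso := sup_span_singleton_le_orthogonal hs hW hv hvv
        have hle := two_mul_finrank_le_of_le_orthogonal hB hiso
        have hrank := Submodule.finrank_sup_span_singleton hvW
        obtain ⟨e, rfl⟩ : ∃ e, d = e + 1 := ⟨d - 1, by omega⟩
        exact ih e _ hiso (by omega))
    refine key.trans ?_
    rw [Module.natCard_eq_pow_finrank (K := K) (V := W),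
      Module.natCard_eq_pow_finrank (K := K) (V := B.orthogonal W), finrank_orthogonal hB, hm,
      show 2 * m - finrank K W = m + d by omega]
    calc _ ≤ Nat.card K ^ m * (2 ^ k * Nat.card K ^ (m * k + (d + 1).choose 2)) +
          Nat.card K ^ (m + d) * (2 ^ k * Nat.card K ^ (m * k + d.choose 2)) := by
          gcongr
          omega
      _ = _ := by rw [hc]; ring

theorem sum_mul_self_eq_zero_of_even {ι : Type*} [Fintype ι] (v : ι → ZMod 2)
    (hv : Even (Finset.univ.filter (fun i => v i ≠ 0)).card) : ∑ i, v i * v i = 0 := by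
  have h : ∀ a : ZMod 2, a * a = if a ≠ 0 then 1 else 0 := by decide
  simp only [h, Finset.sum_boole]
  exact (ZMod.natCast_eq_zero_iff_even).2 hv

theorem nat_card_maps_with_independent_image_le (m : ℕ) (S : Type) [Fintype S]
    (hS : Fintype.card S = 2 * m) :
    Nat.card
        {f : S → {v : Fin (2 * m) → ZMod 2 //
            Even (Finset.univ.filter (fun i => v i ≠ 0)).card} //
          ∀ x y : S, f x ≠ f y →
            ∑ i, (f x : Fin (2 * m) → ZMod 2) i * (f y : Fin (2 * m) → ZMod 2) i ≠ 1} ≤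
      2 ^ (2 * m) * 2 ^ (m * (2 * m) + (m + 1).choose 2) := by
  let B : LinearMap.BilinForm (ZMod 2) (Fin (2 * m) → ZMod 2) := Matrix.toBilin' 1
  have hBapp : ∀ v w, B v w = ∑ i, v i * w i := fun v w => by
    simp [B, Matrix.toBilin'_apply', dotProduct]
  have hB : B.Nondegenerate :=
    LinearMap.BilinForm.nondegenerate_toBilin'_of_det_ne_zero' 1 (by simp)
  have hs : B.IsSymm := ⟨fun v w => by simp [hBapp, mul_comm]⟩
  have key := card_isotropicTuples_le hB hs (m := m) (by simp) (2 * m) m ⊥ bot_le (by simp)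
  rw [Nat.card_zmod] at key
  refine le_trans ?_ key
  let e : Fin (2 * m) ≃ S := (Fintype.equivFinOfCardEq hS).symm
  refine Nat.card_le_card_of_injective (fun f => ⟨fun i => (f.1 (e i)).1, ?_, ?_⟩) ?_
  · intro i
    simp
  · intro i j
    rw [hBapp]
    by_cases h : f.1 (e i) = f.1 (e j)
    · simp only [h]
      exact sum_mul_self_eq_zero_of_even _ (f.1 (e j)).2
    · have h01 : ∀ a : ZMod 2, a ≠ 1 → a = 0 := by decide
      exact h01 _ (f.2 _ _ h)
  · intro f g hfg
    ext x : 3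
    have := congrFun (congrArg Subtype.val hfg) (e.symm x)
    simpa using this

end IsotropicTuples

/-- For every `ε > 0` there is `t₀` such that for every even `t ≥ t₀` and every fixed
`t`-element set `S`, the number of functions `f : S → V` (where `V` is the set of
even-weight vectors of `𝔽₂^t`, so `|V| = 2^{t-1}`) whose image is an independent set of
the graph `G₀` (distinct `u, v` adjacent iff `u ⬝ v = 1`) is at most
`2^{(-3/8 + ε) t²} · |V|^t`. -/
theorem count_maps_with_independent_image (ε : ℝ) (hε : 0 < ε) :
    ∃ t₀ : ℕ, ∀ t : ℕ, t₀ ≤ t → Even t →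
      ∀ (S : Type) [Fintype S], Fintype.card S = t →
        (Nat.card
            {f : S → {v : Fin t → ZMod 2 //
                Even (Finset.univ.filter (fun i => v i ≠ 0)).card} //
              ∀ x y : S, f x ≠ f y →
                ∑ i, (f x : Fin t → ZMod 2) i * (f y : Fin t → ZMod 2) i ≠ 1} : ℝ)
          ≤ (2 : ℝ) ^ ((-(3 : ℝ) / 8 + ε) * t ^ 2) * ((2 : ℝ) ^ ((t : ℝ) - 1)) ^ t := by
  refine ⟨⌈9 / (4 * ε)⌉₊, ?_⟩
  rintro t ht ⟨m, hm⟩ S _ hS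
  obtain rfl : t = 2 * m := by omega
  have hle : (9 / (4 * ε) : ℝ) ≤ ((2 * m : ℕ) : ℝ) := Nat.ceil_le.1 ht
  have hchoose : (((m + 1).choose 2 : ℕ) : ℝ) = (m + 1) * m / 2 := by
    rw [Nat.cast_choose_two]
    push_cast
    ring
  have hcard := nat_card_maps_with_independent_image_le m S hS
  calc _ ≤ ((2 ^ (2 * m) * 2 ^ (m * (2 * m) + (m + 1).choose 2) : ℕ) : ℝ) := by
        exact_mod_cast hcard
    _ = (2 : ℝ) ^ ((2 * m + (m * (2 * m) + (m + 1).choose 2) : ℕ) : ℝ) := by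
        rw [Real.rpow_natCast, ← pow_add, Nat.cast_pow, Nat.cast_ofNat]
    _ ≤ _ := by
        rw [← Real.rpow_mul_natCast (by norm_num), ← Real.rpow_add (by norm_num)]
        refine Real.rpow_le_rpow_of_exponent_le (by norm_num) ?_
        rw [div_le_iff₀ (by positivity)] at hle
        push_cast [hchoose] at hle ⊢
        nlinarith [mul_le_mul_of_nonneg_right hle (Nat.cast_nonneg (α := ℝ) m)]
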